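/- Let n ≥ 2 and let x_1,…,x_{n−1}, t, y, v_1,…,v_n, u_1,…,u_n ∈ P be such that x_1,…,x_{n−1}, y are pairwise distinct, v_1,…,v_n are pairwise distinct, and u_1,…,u_n are pairwise distinct. Then in Q_n(P): Δ((x_1,…,x_{n−1},t),(v_1,…,v_n)) / Δ((x_1,…,x_{n−1},y),(v_1,…,v_n)) = Δ((x_1,…,x_{n−1},t),(u_1,…,u_n)) / Δ((x_1,…,x_{n−1},y),(u_1,…,u_n)); that is, the quotient of two (n×n)-determinants with the same right-side n-tuple does not depend on that right-side n-tuple. -/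

import Mathlib

noncomputable section

open scoped Classical
open MvPolynomial

set_option maxHeartbeats 1000000
set_option synthInstance.maxHeartbeats 400000

instance fact01 : Fact ((0:ℝ) < 1) := ⟨one_pos⟩

/-- The circle, modelled as `ℝ/ℤ`. -/
abbrev Circle1 : Type := AddCircle (1:ℝ)

/-- The coordinate in `[0,1)` of the point `x` of the circle obtained after removing the
point `o` and identifying the complement of `o` with an interval. -/
def coordAt (o x : Circle1) : ℝ := ((AddCircle.equivIco 1 0) (x - o) : ℝ)

/-- The sign `△` of a real number, as a rational number in `{-1, 0, 1}`. -/
def sgnQ (a : ℝ) : ℚ := if a < 0 then -1 else if a = 0 then 0 else 1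

/-- The linking number `J(rx, sy)` of the chords `rx` and `sy`, computed using the
cut point `o`. -/
def linkingAt (o r x s y : Circle1) : ℚ :=
  (1/2) * (sgnQ (coordAt o r - coordAt o x) * sgnQ (coordAt o r - coordAt o y)
        * sgnQ (coordAt o y - coordAt o x)
      - sgnQ (coordAt o r - coordAt o x) * sgnQ (coordAt o r - coordAt o s)
        * sgnQ (coordAt o s - coordAt o x))

lemma circle1_infinite : Infinite Circle1 := by
  have h : (Set.Ico (0:ℝ) (0+1)).Infinite := Set.Ico_infinite (by norm_num)
  haveI := h.to_subtype
  exact Infinite.of_injective (fun q : Set.Ico (0:ℝ) (0+1) => (AddCircle.equivIco 1 0).symm q)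
    ((AddCircle.equivIco 1 0).symm.injective)

lemma exists_cut (r x s y : Circle1) :
    ∃ o : Circle1, o ≠ r ∧ o ≠ x ∧ o ≠ s ∧ o ≠ y := by
  haveI : Infinite Circle1 := circle1_infinite
  have hfin : ({r, x, s, y} : Set Circle1).Finite :=
    (((Set.finite_singleton y).insert s).insert x).insert r
  obtain ⟨o, ho⟩ := hfin.infinite_compl.nonempty
  simp only [Set.mem_compl_iff, Set.mem_insert_iff, Set.mem_singleton_iff, not_or] at ho
  exact ⟨o, ho.1, ho.2.1, ho.2.2.1, ho.2.2.2⟩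

/-- The linking number `J(rx, sy)` of the chords `rx` and `sy` (computed with respect to
some cut point distinct from the four points; by the independence of the choice this is
the linking number). -/
def linkQ (r x s y : Circle1) : ℚ := linkingAt (exists_cut r x s y).choose r x s y

/-- The set of points of the circle `l`, listed in anticlockwise (cyclic) order:
there is a cut point `o` avoiding them such that the induced coordinates are
strictly increasing along the list. -/
def AnticlockwiseList (l : List Circle1) : Prop :=
  ∃ o : Circle1, (∀ p ∈ l, p ≠ o) ∧ (l.map (coordAt o)).Chain' (· < ·)

/-- Index type for the generators `xy` of the swapping ring of `P`
(one generator for each ordered pair of distinct points; the generators `xx`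
are identified with `0`). -/
abbrev SwapIdx (P : Set Circle1) : Type := {q : (↥P) × (↥P) // q.1 ≠ q.2}

/-- The swapping ring `Z(P)`: the polynomial ring over `K` on the generators `xy`,
`x ≠ y ∈ P` (this realizes the commutative ring generated by all ordered pairs `xy`
subject to the relations `xx = 0`). -/
abbrev SwapRing (K : Type) [Field K] (P : Set Circle1) : Type := MvPolynomial (SwapIdx P) K

/-- The generator `xy` of the swapping ring (equal to `0` when `x = y`). -/
def gen (K : Type) [Field K] (P : Set Circle1) (x y : ↥P) : SwapRing K P :=
  if h : x ≠ y then MvPolynomial.X (⟨(x, y), h⟩ : SwapIdx P) else 0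

/-- The value of the `(c1,c2)`-swapping bracket on two generators `rx` and `sy`:
`J(rx,sy) • (c1 • ry·sx + c2 • rx·sy)`. -/
def genBr (K : Type) [Field K] (P : Set Circle1) (c1 c2 : K) (g g' : SwapIdx P) :
    SwapRing K P :=
  ((linkQ g.1.1.1 g.1.2.1 g'.1.1.1 g'.1.2.1 : ℚ) : K) •
    (c1 • (gen K P g.1.1 g'.1.2 * gen K P g'.1.1 g.1.2)
      + c2 • (gen K P g.1.1 g.1.2 * gen K P g'.1.1 g'.1.2))

/-- The `(c1,c2)`-swapping bracket on `Z(P)`: the biderivation extending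
`{rx, sy} = J(rx,sy)·(c1·ry·sx + c2·rx·sy)` by the Leibniz rule in each argument.
The swapping bracket is the case `c1 = 1, c2 = 0`. -/
def swapBr (K : Type) [Field K] (P : Set Circle1) (c1 c2 : K) (a b : SwapRing K P) :
    SwapRing K P :=
  (MvPolynomial.mkDerivation K
    (fun g : SwapIdx P => (MvPolynomial.mkDerivation K (genBr K P c1 c2 g)) b)) a

/-- `Δ((x_1,…,x_m),(y_1,…,y_m)) = det (x_i y_j)` in the swapping ring. -/
def Dmat (K : Type) [Field K] (P : Set Circle1) (m : ℕ) (xs ys : Fin m → ↥P) :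
    SwapRing K P :=
  Matrix.det (Matrix.of fun i j => gen K P (xs i) (ys j))

/-- The ideal `R_n(P)` of `Z(P)` generated by all `(n+1)×(n+1)` determinants
`Δ((x_1,…,x_{n+1}),(y_1,…,y_{n+1}))`. -/
def Rideal (K : Type) [Field K] (P : Set Circle1) (n : ℕ) : Ideal (SwapRing K P) :=
  Ideal.span {D : SwapRing K P | ∃ xs ys : Fin (n+1) → ↥P, D = Dmat K P (n+1) xs ys}

/-- The rank `n` swapping ring `Z_n(P) = Z(P)/R_n(P)`. -/
abbrev ZnRing (K : Type) [Field K] (P : Set Circle1) (n : ℕ) : Type :=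
  SwapRing K P ⧸ Rideal K P n

/-- The quotient map `Z(P) → Z_n(P)`. -/
def toZn (K : Type) [Field K] (P : Set Circle1) (n : ℕ) :
    SwapRing K P →+* ZnRing K P n := Ideal.Quotient.mk (Rideal K P n)

/-- The total fraction ring `Q_n(P)` of the rank `n` swapping ring. -/
abbrev QnRing (K : Type) [Field K] (P : Set Circle1) (n : ℕ) : Type :=
  Localization (nonZeroDivisors (ZnRing K P n))

/-- The canonical map `Z(P) → Q_n(P)`. -/
def toQn (K : Type) [Field K] (P : Set Circle1) (n : ℕ) :
    SwapRing K P →+* QnRing K P n :=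
  (algebraMap (ZnRing K P n) (QnRing K P n)).comp (toZn K P n)

/-- `Bq` is the extension to the total fraction ring `Q_n(P)` of the `(c1,c2)`-swapping
bracket of the rank `n` swapping algebra: it agrees with the swapping bracket on the image
of `Z(P)` and satisfies the Leibniz rule in both arguments (these properties determine it
uniquely). -/
def IsQnBracket (K : Type) [Field K] (P : Set Circle1) (n : ℕ) (c1 c2 : K)
    (Bq : QnRing K P n → QnRing K P n → QnRing K P n) : Prop :=
  (∀ a b : SwapRing K P,
      Bq (toQn K P n a) (toQn K P n b) = toQn K P n (swapBr K P c1 c2 a b)) ∧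
  (∀ a b c : QnRing K P n, Bq (a * b) c = a * Bq b c + b * Bq a c) ∧
  (∀ a b c : QnRing K P n, Bq a (b * c) = b * Bq a c + c * Bq a b)

/-- The `n`-tuple `(x_1, …, x_a, y_1, …, y_b, z_1, …, z_{n-a-b})` built from three
families of points (families are indexed from `0`, i.e. `x 0 = x_1`). -/
def rows3 {α : Type*} {n : ℕ} (x y z : ℕ → α) (a b : ℕ) : Fin n → α :=
  fun i => if (i : ℕ) < a then x (i : ℕ)
    else if (i : ℕ) < a + b then y ((i : ℕ) - a)
    else z ((i : ℕ) - (a + b))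

/-- The `n`-tuple `(x_1, …, x_a, y_1, …, y_b, z_1, …, z_{n-1-a-b}, w)` built from three
families of points and a final point `w`. -/
def rows3s {α : Type*} {n : ℕ} (x y z : ℕ → α) (a b : ℕ) (w : α) : Fin n → α :=
  fun i => if (i : ℕ) < a then x (i : ℕ)
    else if (i : ℕ) < a + b then y ((i : ℕ) - a)
    else if (i : ℕ) < n - 1 then z ((i : ℕ) - (a + b))
    else w

/-- The `n`-tuple `(x_1, …, x_{n-1}, t)`. -/
def snocTup {α : Type*} {n : ℕ} (x : ℕ → α) (t : α) : Fin n → α :=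
  fun i => if (i : ℕ) < n - 1 then x (i : ℕ) else t

/-- The list `f_a, f_{a-1}, …, f_1` (descending enumeration). -/
def descPts (f : ℕ → Circle1) (a : ℕ) : List Circle1 := ((List.range a).map f).reverse

/-- The list `f_1, f_2, …, f_a` (ascending enumeration). -/
def ascPts (f : ℕ → Circle1) (a : ℕ) : List Circle1 := (List.range a).map f

/-- The `(n×n)`-determinant quotient `Δ(numR, v)/Δ(denR, v)` as an element of the total
fraction ring `Q_n(P)`. -/
def EQuot (K : Type) [Field K] (P : Set Circle1) (n : ℕ)
    (numR denR v : Fin n → ↥P)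
    (h : toZn K P n (Dmat K P n denR v) ∈ nonZeroDivisors (ZnRing K P n)) :
    QnRing K P n :=
  Localization.mk (toZn K P n (Dmat K P n numR v)) ⟨toZn K P n (Dmat K P n denR v), h⟩

/-
Send the generator `xy` to `∑ₖ aₓₖ bᵧₖ`, where `a` and `b` are generic matrices with `n` columns,
modulo the quadrics `∑ₖ aₓₖ bₓₖ` that account for `xx = 0`. An `n × n` determinant `Δ(x, y)` becomes
`det aₓ · det bᵧ`, so a quotient of two of them with the same right-hand tuple forgets that tuple.

To transport this to `Z_n(P)` one needs the kernel to be exactly `R_n(P)`. Without the diagonal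
relations this is the second fundamental theorem of invariant theory: standard monomials span modulo
the `(n + 1)`-minors, by straightening, and their images are linearly independent, since each
contributes a leading exponent which is read off a decomposition into `n` antichains. The
diagonal relations are then imposed by projecting orthogonally, for the Fischer form
`⟨f, g⟩ = (f(∂) g)(0)`, onto the subalgebra generated by the `∑ₖ aₓₖ bᵧₖ`: multiplication by
`∑ₖ aₓₖ bₓₖ` and its adjoint both preserve that subalgebra.

For `n ≥ 2` the quadrics generate a prime ideal, because each of them is prime over the domain
defined by the others. Hence `Z_n(P)` is a domain, in which determinants of distinct points do not
vanish.
-/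

section Quadric

variable {σ τ R S : Type*}

lemma coeff_sum_monomial_of_injective [Fintype τ] [CommSemiring R] {e : τ → σ →₀ ℕ}
    (he : Function.Injective e) (d : σ →₀ ℕ) [Decidable (d ∈ Set.range e)] :
    coeff d (∑ k, monomial (e k) (1 : R)) = if d ∈ Set.range e then 1 else 0 := by
  simp only [coeff_sum, coeff_monomial]
  split_ifs with hd
  · obtain ⟨k, rfl⟩ := hd
    simp only [he.eq_iff, Finset.sum_ite_eq', Finset.mem_univ, if_true]
  · exact Finset.sum_eq_zero fun k _ => if_neg fun hk => hd ⟨k, hk⟩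

/-- Dividing by a monic polynomial commutes with extension of scalars, and so does the
vanishing of the remainder. -/
lemma dvd_of_map_dvd_map_of_monic [CommRing R] [CommRing S] [IsDomain S] (m : MonomialOrder σ)
    {φ : R →+* S} (hφ : Function.Injective φ) {q f : MvPolynomial σ R} (hq : m.Monic q)
    (h : map φ q ∣ map φ f) : q ∣ f := by
  have degree_map (p : MvPolynomial σ R) : m.degree (map φ p) = m.degree p := by
    simp only [MonomialOrder.degree, support_map_of_injective p hφ]
  obtain ⟨c, hc⟩ := h
  obtain ⟨g, r, hf, -, hr⟩ := m.div_single (b := q) (by rw [hq]; exact isUnit_one) f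
  have remainder_eq : map φ r = map φ q * (c - map φ g) := by
    rw [mul_sub, ← hc, hf, map_add, map_mul]; ring
  rcases eq_or_ne r 0 with rfl | hr0
  · exact ⟨g, by rw [hf]; ring⟩
  have hr0' : map φ q * (c - map φ g) ≠ 0 := by
    rwa [← remainder_eq, Ne, map_eq_zero_iff _ (map_injective φ hφ)]
  refine absurd ?_ (hr _ (m.degree_mem_support hr0))
  rw [← degree_map, ← degree_map r, remainder_eq,
    m.degree_mul (left_ne_zero_of_mul hr0') (right_ne_zero_of_mul hr0')]
  exact le_self_add

/-- The quadratic form `∑ aₖ bₖ` in the variables `aₖ = X (inl k)` and `bₖ = X (inr k)`. -/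
def hyperbolicQuadric (R τ : Type*) [CommSemiring R] [Fintype τ] : MvPolynomial (τ ⊕ τ) R :=
  ∑ k, X (Sum.inl k) * X (Sum.inr k)

lemma map_hyperbolicQuadric [Fintype τ] [CommSemiring R] [CommSemiring S] (φ : R →+* S) :
    map φ (hyperbolicQuadric R τ) = hyperbolicQuadric S τ := by
  simp only [hyperbolicQuadric, map_sum, map_mul, map_X]

lemma prime_hyperbolicQuadric_of_field [Fintype τ] [Nontrivial τ] [Field R] :
    Prime (hyperbolicQuadric R τ) := by
  have eq_sumSMulXSMulY : hyperbolicQuadric R τ =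
      sumSMulXSMulY (Finsupp.equivFunOnFinite.symm fun _ => 1) := by
    rw [sumSMulXSMulY, Finsupp.linearCombination_apply, Finsupp.sum_fintype _ _ (by simp)]
    simp [hyperbolicQuadric]
  obtain ⟨k, l, hkl⟩ := exists_pair_ne τ
  rw [eq_sumSMulXSMulY, ← UniqueFactorizationMonoid.irreducible_iff_prime]
  refine irreducible_sumSMulXSMulY _ ?_ fun r hr => ?_
  · exact ⟨k, by simp, l, by simp, hkl⟩
  · simpa [isUnit_iff_dvd_one] using hr k

lemma monic_hyperbolicQuadric [Fintype τ] [Nonempty τ] [CommRing R] [Nontrivial R]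
    (m : MonomialOrder (τ ⊕ τ)) : m.Monic (hyperbolicQuadric R τ) := by
  let e (k : τ) : (τ ⊕ τ) →₀ ℕ := Finsupp.single (Sum.inl k) 1 + Finsupp.single (Sum.inr k) 1
  have he : Function.Injective e := fun k l hkl => by
    simpa [e, Finsupp.single_apply, eq_comm] using DFunLike.congr_fun hkl (Sum.inl k)
  have eq_sum_monomial : hyperbolicQuadric R τ = ∑ k, monomial (e k) 1 := by
    simp only [hyperbolicQuadric, X, monomial_mul, mul_one, e]
  have coeff_eq (d) : coeff d (hyperbolicQuadric R τ) = if d ∈ Set.range e then 1 else 0 := by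
    rw [eq_sum_monomial, coeff_sum_monomial_of_injective he]
  have ne_zero : hyperbolicQuadric R τ ≠ 0 := fun h => by
    simpa [h] using coeff_eq (e (Classical.arbitrary τ))
  have leadingCoeff_ne_zero : m.leadingCoeff (hyperbolicQuadric R τ) ≠ 0 :=
    m.leadingCoeff_ne_zero_iff.2 ne_zero
  rw [MonomialOrder.leadingCoeff, coeff_eq] at leadingCoeff_ne_zero
  rw [MonomialOrder.Monic, MonomialOrder.leadingCoeff, coeff_eq]
  exact if_pos (ite_ne_right_iff.1 leadingCoeff_ne_zero).1

lemma prime_hyperbolicQuadric [Fintype τ] [Nontrivial τ] [CommRing R] [IsDomain R] :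
    Prime (hyperbolicQuadric R τ) := by
  let _ : LinearOrder (τ ⊕ τ) := LinearOrder.lift' (Fintype.equivFin _) (Equiv.injective _)
  have hφ := IsFractionRing.injective R (FractionRing R)
  have hprime : Prime (map (algebraMap R (FractionRing R)) (hyperbolicQuadric R τ)) := by
    rw [map_hyperbolicQuadric]; exact prime_hyperbolicQuadric_of_field
  have dvd_of_dvd (f : MvPolynomial (τ ⊕ τ) R)
      (h : map (algebraMap R (FractionRing R)) (hyperbolicQuadric R τ) ∣ map (algebraMap R _) f) :=
    dvd_of_map_dvd_map_of_monic .lex hφ (monic_hyperbolicQuadric _) h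
  refine ⟨ne_zero_of_map hprime.ne_zero, fun h => hprime.not_isUnit (h.map _), fun f g h => ?_⟩
  have := map_dvd (map (algebraMap R (FractionRing R))) h
  rw [map_mul] at this
  exact (hprime.dvd_or_dvd this).imp (dvd_of_dvd f) (dvd_of_dvd g)

end Quadric

section QuadricIdeal

lemma isPrime_map_C_sup_span_singleton {σ R : Type*} [CommRing R] {I : Ideal R}
    {q : MvPolynomial σ R} (hq : Prime (map (Ideal.Quotient.mk I) q)) :
    (I.map C ⊔ Ideal.span {q}).IsPrime := by
  have eq_comap : I.map C ⊔ Ideal.span {q} =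
      (Ideal.span {map (Ideal.Quotient.mk I) q}).comap (map (Ideal.Quotient.mk I)) := by
    rw [← Set.image_singleton, ← Ideal.map_span, Ideal.comap_map_of_surjective'
      (map (Ideal.Quotient.mk I)) (map_surjective _ Ideal.Quotient.mk_surjective), ker_map,
      Ideal.mk_ker, sup_comm]
  have := (Ideal.span_singleton_prime hq.ne_zero).2 hq
  exact eq_comap ▸ Ideal.comap_isPrime _ _

/-- The entry `∑ₖ aᵢₖ bⱼₖ` of the product of the generic `ι × n` matrix `a` and the transpose of
the generic `ι × n` matrix `b`, where `aᵢₖ = X (i, inl k)` and `bⱼₖ = X (j, inr k)`. -/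
def pairing (R : Type*) [CommSemiring R] (n : ℕ) {ι : Type*} (i j : ι) :
    MvPolynomial (ι × (Fin n ⊕ Fin n)) R :=
  ∑ k, X (i, Sum.inl k) * X (j, Sum.inr k)

variable {R : Type*} {n : ℕ} {ι κ : Type*}

lemma rename_pairing [CommSemiring R] (e : ι → κ) (i j : ι) :
    rename (Prod.map e id) (pairing R n i j) = pairing R n (e i) (e j) := by
  simp only [pairing, map_sum, map_mul, rename_X, Prod.map_apply, id_eq]

lemma map_pairing [CommSemiring R] {S : Type*} [CommSemiring S] (φ : R →+* S) (i j : ι) :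
    map φ (pairing R n i j) = pairing S n i j := by
  simp only [pairing, map_sum, map_mul, map_X]

/-- The ideal generated by the diagonal pairings `∑ₖ aᵢₖ bᵢₖ`; it corresponds to the relations
`xx = 0` of the swapping ring. -/
def diagonalPairingIdeal (R : Type*) [CommRing R] (n : ℕ) (ι : Type*) :
    Ideal (MvPolynomial (ι × (Fin n ⊕ Fin n)) R) :=
  Ideal.span (Set.range fun i => pairing R n i i)

variable [CommRing R]

lemma pairing_self_mem_diagonalPairingIdeal (i : ι) :
    pairing R n i i ∈ diagonalPairingIdeal R n ι :=
  Ideal.subset_span ⟨i, rfl⟩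

lemma diagonalPairingIdeal_le_comap_rename (e : ι → κ) :
    diagonalPairingIdeal R n ι ≤
      (diagonalPairingIdeal R n κ).comap (rename (Prod.map e id)) := by
  rw [diagonalPairingIdeal, Ideal.span_le]
  rintro _ ⟨i, rfl⟩
  rw [SetLike.mem_coe, Ideal.mem_comap, rename_pairing]
  exact pairing_self_mem_diagonalPairingIdeal _

lemma comap_rename_diagonalPairingIdeal {e : ι → κ} (he : Function.Injective e) :
    (diagonalPairingIdeal R n κ).comap (rename (Prod.map e id)) = diagonalPairingIdeal R n ι := by
  refine le_antisymm (fun f hf => ?_) (diagonalPairingIdeal_le_comap_rename e)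
  have he' : Function.Injective (Prod.map e (id : Fin n ⊕ Fin n → _)) :=
    he.prodMap Function.injective_id
  have le_comap_killCompl : diagonalPairingIdeal R n κ ≤
      (diagonalPairingIdeal R n ι).comap (killCompl he') := by
    rw [diagonalPairingIdeal, Ideal.span_le]
    rintro _ ⟨j, rfl⟩
    rw [SetLike.mem_coe, Ideal.mem_comap]
    by_cases hj : j ∈ Set.range e
    · obtain ⟨i, rfl⟩ := hj
      dsimp only
      rw [← rename_pairing, killCompl_rename_app]
      exact pairing_self_mem_diagonalPairingIdeal i
    · have killCompl_X (w : Fin n ⊕ Fin n) :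
          killCompl he' (X (j, w) : MvPolynomial _ R) = 0 := by
        rw [killCompl, aeval_X, dif_neg]
        rintro ⟨⟨i, w'⟩, h⟩
        exact hj ⟨i, congrArg Prod.fst h⟩
      simp only [pairing, map_sum, map_mul, killCompl_X, zero_mul, Finset.sum_const_zero,
        Submodule.zero_mem]
  simpa only [Ideal.mem_comap, killCompl_rename_app] using le_comap_killCompl hf

/-- The separation of the variables in the `none` row from those in all other rows, which move to
the coefficient ring. -/
def peelRow (R : Type*) [CommRing R] (ι τ : Type*) :
    MvPolynomial (Option ι × τ) R ≃+* MvPolynomial τ (MvPolynomial (ι × τ) R) :=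
  ((renameEquiv R optionProdEquiv).trans (sumAlgEquiv R τ (ι × τ))).toRingEquiv

lemma peelRow_pairing_none :
    peelRow R ι _ (pairing R n none none) = hyperbolicQuadric _ (Fin n) := by
  simp [peelRow, pairing, hyperbolicQuadric]

lemma peelRow_pairing_some (i : ι) :
    peelRow R ι _ (pairing R n (some i) (some i)) = C (pairing R n i i) := by
  simp [peelRow, pairing]

lemma map_peelRow_diagonalPairingIdeal :
    (diagonalPairingIdeal R n (Option ι)).map (peelRow R ι (Fin n ⊕ Fin n)) =
      (diagonalPairingIdeal R n ι).map C ⊔ Ideal.span {hyperbolicQuadric _ (Fin n)} := by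
  rw [diagonalPairingIdeal, diagonalPairingIdeal, Ideal.map_span, Ideal.map_span,
    ← Ideal.span_union, ← Set.range_comp, ← Set.range_comp, Option.range_eq, Set.insert_eq,
    Set.union_comm]
  simp only [Function.comp_def, peelRow_pairing_none, peelRow_pairing_some]

lemma diagonalPairingIdeal_option_isPrime [Nontrivial (Fin n)]
    (h : (diagonalPairingIdeal R n ι).IsPrime) :
    (diagonalPairingIdeal R n (Option ι)).IsPrime := by
  have hquadric : Prime (map (Ideal.Quotient.mk (diagonalPairingIdeal R n ι))
      (hyperbolicQuadric _ (Fin n))) := by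
    rw [map_hyperbolicQuadric]; exact prime_hyperbolicQuadric
  have := isPrime_map_C_sup_span_singleton hquadric
  rw [← map_peelRow_diagonalPairingIdeal] at this
  rw [← Ideal.comap_map_of_bijective _ (peelRow R ι (Fin n ⊕ Fin n)).bijective
    (I := diagonalPairingIdeal R n (Option ι))]
  exact Ideal.comap_isPrime _ _

lemma diagonalPairingIdeal_isPrime_of_finite [IsDomain R] [Nontrivial (Fin n)] [Finite ι] :
    (diagonalPairingIdeal R n ι).IsPrime := by
  induction ι using Finite.induction_empty_option with
  | of_equiv e h =>
    rw [← comap_rename_diagonalPairingIdeal e.symm.injective]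
    exact Ideal.comap_isPrime _ _
  | h_empty =>
    rw [diagonalPairingIdeal, Set.range_eq_empty, Ideal.span_empty]
    exact Ideal.isPrime_bot
  | h_option h => exact diagonalPairingIdeal_option_isPrime h

lemma diagonalPairingIdeal_isPrime [IsDomain R] [Nontrivial (Fin n)] :
    (diagonalPairingIdeal R n ι).IsPrime := by
  have isPrime_fin (N : ℕ) : (diagonalPairingIdeal R n (Fin N)).IsPrime :=
    diagonalPairingIdeal_isPrime_of_finite
  refine ⟨fun h => (isPrime_fin 0).ne_top ?_, fun {f g} hfg => ?_⟩
  · rw [← comap_rename_diagonalPairingIdeal (Function.injective_of_subsingleton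
      (Fin.elim0 : Fin 0 → ι)), h, Ideal.comap_top]
  · obtain ⟨N, e, he, hrange⟩ := ((f.vars ∪ g.vars).image Prod.fst).finite_toSet.fin_param
    have subset_range (p : MvPolynomial (ι × (Fin n ⊕ Fin n)) R) (hp : p.vars ⊆ f.vars ∪ g.vars) :
        ↑p.vars ⊆ Set.range (Prod.map e (id : Fin n ⊕ Fin n → _)) := fun z hz => by
      rw [Set.range_prodMap, hrange]
      exact ⟨Finset.mem_coe.2 (Finset.mem_image_of_mem _ (hp hz)), by simp⟩
    obtain ⟨f, rfl⟩ := exists_rename_eq_of_vars_subset_range f _ (he.prodMap Function.injective_id)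
      (subset_range f Finset.subset_union_left)
    obtain ⟨g, rfl⟩ := exists_rename_eq_of_vars_subset_range g _ (he.prodMap Function.injective_id)
      (subset_range g Finset.subset_union_right)
    rw [← map_mul, ← Ideal.mem_comap, comap_rename_diagonalPairingIdeal he] at hfg
    exact ((isPrime_fin N).mem_or_mem hfg).imp (diagonalPairingIdeal_le_comap_rename e ·)
      (diagonalPairingIdeal_le_comap_rename e ·)

end QuadricIdeal

section GenericProduct

variable {R : Type*} {n m : ℕ} {ι κ : Type*}

/-- The homomorphism sending the generic `ι × ι` matrix to the product `a bᵀ` of two generic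
`ι × n` matrices. -/
def genericProduct (R : Type*) [CommSemiring R] (n : ℕ) (ι : Type*) :
    MvPolynomial (ι × ι) R →ₐ[R] MvPolynomial (ι × (Fin n ⊕ Fin n)) R :=
  aeval fun z => pairing R n z.1 z.2

lemma genericProduct_X [CommSemiring R] (z : ι × ι) :
    genericProduct R n ι (X z) = pairing R n z.1 z.2 :=
  aeval_X _ _

lemma map_genericProduct [CommSemiring R] {S : Type*} [CommSemiring S] (φ : R →+* S)
    (f : MvPolynomial (ι × ι) R) :
    map φ (genericProduct R n ι f) = genericProduct S n ι (map φ f) := by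
  induction f using MvPolynomial.induction_on with
  | C c => simp only [genericProduct, algHom_C, algebraMap_eq, map_C]
  | add f g hf hg => simp only [map_add, hf, hg]
  | mul_X f z hf => simp only [map_mul, hf, map_X, genericProduct_X, map_pairing]

lemma rename_genericProduct [CommSemiring R] (e : ι → κ) (f : MvPolynomial (ι × ι) R) :
    rename (Prod.map e id) (genericProduct R n ι f) =
      genericProduct R n κ (rename (Prod.map e e) f) := by
  induction f using MvPolynomial.induction_on with
  | C c => simp only [genericProduct, algHom_C, algebraMap_eq]
  | add f g hf hg => simp only [map_add, hf, hg]
  | mul_X f z hf =>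
    simp only [map_mul, hf, rename_X, genericProduct_X, rename_pairing, Prod.map_fst, Prod.map_snd]

variable [CommRing R]

/-- The rows `p` of the generic matrix `a`. -/
def leftMatrix (R : Type*) [CommRing R] (n : ℕ) (p : Fin m → ι) :
    Matrix (Fin m) (Fin n) (MvPolynomial (ι × (Fin n ⊕ Fin n)) R) :=
  Matrix.of fun i k => X (p i, Sum.inl k)

/-- The rows `q` of the generic matrix `b`. -/
def rightMatrix (R : Type*) [CommRing R] (n : ℕ) (q : Fin m → ι) :
    Matrix (Fin m) (Fin n) (MvPolynomial (ι × (Fin n ⊕ Fin n)) R) :=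
  Matrix.of fun j k => X (q j, Sum.inr k)

lemma of_pairing_eq_leftMatrix_mul_rightMatrix_transpose (p q : Fin m → ι) :
    (Matrix.of fun i j => pairing R n (p i) (q j)) =
      leftMatrix R n p * (rightMatrix R n q).transpose := by
  ext1 i j
  simp only [Matrix.of_apply, pairing, leftMatrix, rightMatrix, Matrix.mul_apply,
    Matrix.transpose_apply]

lemma det_mul_eq_zero_of_fin_succ {A : Type*} [CommRing A] (M : Matrix (Fin (n + 1)) (Fin n) A)
    (N : Matrix (Fin n) (Fin (n + 1)) A) : (M * N).det = 0 := by
  have eq_mul_of_snoc_zero : M * N = (Matrix.of fun i => Fin.snoc (α := fun _ => A) (M i) 0) *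
      (Matrix.of fun k j => Fin.snoc (α := fun _ => A) (fun k => N k j) 0 k) := by
    ext i j
    simp [Matrix.mul_apply, Fin.sum_univ_castSucc]
  rw [eq_mul_of_snoc_zero, Matrix.det_mul,
    Matrix.det_eq_zero_of_column_eq_zero (Fin.last n) (by simp), zero_mul]

/-- The determinant of the rows `p` and columns `q` of the generic `ι × ι` matrix. -/
def genericMinor (R : Type*) [CommRing R] (p q : Fin m → ι) : MvPolynomial (ι × ι) R :=
  Matrix.det (Matrix.of fun i j => X (p i, q j))

lemma map_genericMinor {F A : Type*} [CommRing A] [FunLike F (MvPolynomial (ι × ι) R) A]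
    [RingHomClass F (MvPolynomial (ι × ι) R) A] (φ : F) (p q : Fin m → ι) :
    φ (genericMinor R p q) = Matrix.det (Matrix.of fun i j => φ (X (p i, q j))) :=
  RingHom.map_det (φ : MvPolynomial (ι × ι) R →+* A) _

/-- The ideal of the `(n + 1)`-minors of the generic `ι × ι` matrix. -/
def minorIdeal (R : Type*) [CommRing R] (n : ℕ) (ι : Type*) : Ideal (MvPolynomial (ι × ι) R) :=
  Ideal.span {f | ∃ p q : Fin (n + 1) → ι, f = genericMinor R p q}

lemma minorIdeal_le_ker_genericProduct :
    minorIdeal R n ι ≤ RingHom.ker (genericProduct R n ι) := by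
  rw [minorIdeal, Ideal.span_le]
  rintro _ ⟨p, q, rfl⟩
  rw [SetLike.mem_coe, RingHom.mem_ker, map_genericMinor]
  simp only [genericProduct_X, of_pairing_eq_leftMatrix_mul_rightMatrix_transpose,
    det_mul_eq_zero_of_fin_succ]

end GenericProduct

section StandardMonomial

/-- Some `k + 1` elements of `S` form a sequence of consecutively `r`-related elements. -/
def HasChain {α : Type*} (r : α → α → Prop) (S : Set α) (k : ℕ) : Prop :=
  ∃ c : Fin (k + 1) → α, (∀ i, c i ∈ S) ∧ ∀ i : Fin k, r (c i.castSucc) (c i.succ)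

lemma HasChain.cons {α : Type*} {r : α → α → Prop} {S T : Set α} {k : ℕ} (hTS : T ⊆ S)
    (hT : ∀ z ∈ T, ∃ y ∈ S, r y z) (h : HasChain r T k) : HasChain r S (k + 1) := by
  obtain ⟨c, hc, hr⟩ := h
  obtain ⟨y, hy, hyc⟩ := hT _ (hc 0)
  refine ⟨Fin.cons y c, Fin.cases hy fun i => hTS (hc i), Fin.cases hyc fun i => ?_⟩
  simpa only [← Fin.succ_castSucc, Fin.cons_succ] using hr i

/-- The colour of an element is read off the length of the longest chain ending in it. -/
lemma exists_coloring_of_not_hasChain {α : Type*} {r : α → α → Prop} {S : Set α} {k : ℕ}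
    (h : ¬ HasChain r S k) :
    ∃ c : α → ℕ, (∀ z ∈ S, c z < k) ∧ ∀ z ∈ S, ∀ w ∈ S, c z = c w → ¬ r z w := by
  induction k generalizing S with
  | zero =>
    have hS (z) (hz : z ∈ S) : False := h ⟨fun _ => z, fun _ => hz, fun i => i.elim0⟩
    exact ⟨0, fun z hz => (hS z hz).elim, fun z hz => (hS z hz).elim⟩
  | succ k ih =>
    let T := {z ∈ S | ∃ y ∈ S, r y z}
    obtain ⟨c, hlt, hc⟩ := ih (S := T) fun hT => h (hT.cons (Set.sep_subset S _) fun _ hz => hz.2)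
    refine ⟨fun z => if z ∈ T then c z else k, fun z _ => ?_, fun z hz w hw heq hr => ?_⟩
    · dsimp only
      split_ifs with hzT
      · exact (hlt z hzT).trans k.lt_succ_self
      · exact k.lt_succ_self
    · have hwT : w ∈ T := ⟨hw, z, hz, hr⟩
      simp only [if_pos hwT] at heq
      split_ifs at heq with hzT
      · exact hc z hzT w hwT heq hr
      · exact (hlt w hwT).ne' heq

/-- Both coordinates are strictly smaller. -/
def StrictlyNorthwest {ι : Type*} [LT ι] (z w : ι × ι) : Prop := z.1 < w.1 ∧ z.2 < w.2

/-- The monomial with exponent `d` involves no full diagonal of an `(n + 1)`-minor. -/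
def IsStandard {ι : Type*} [LT ι] (n : ℕ) (d : ι × ι →₀ ℕ) : Prop :=
  ¬ HasChain StrictlyNorthwest (d.support : Set (ι × ι)) n

lemma sum_single_one_le {α τ : Type*} [Fintype τ] {z : τ → α} (hz : Function.Injective z)
    {d : α →₀ ℕ} (hd : ∀ k, z k ∈ d.support) : ∑ k, Finsupp.single (z k) 1 ≤ d := fun w => by
  simp only [Finsupp.finsetSum_apply, Finsupp.single_apply]
  by_cases hw : ∃ k, z k = w
  · obtain ⟨k, rfl⟩ := hw
    simpa [hz.eq_iff] using Nat.one_le_iff_ne_zero.2 (Finsupp.mem_support_iff.1 (hd k))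
  · simp only [not_exists] at hw
    simp [hw]

lemma sum_comp_perm_mul_lt_of_strictMono {m : ℕ} {f g : Fin m → ℕ} (hf : StrictMono f)
    (hg : StrictMono g) {σ : Equiv.Perm (Fin m)} (hσ : σ ≠ 1) :
    ∑ k, f (σ k) * g k < ∑ k, f k * g k := by
  have hfg : Monovary f g := fun i j hij => hf.monotone (hg.lt_iff_lt.1 hij).le
  rw [hfg.sum_comp_perm_mul_lt_sum_mul_iff]
  intro hσfg
  have hσmono : StrictMono σ := fun i j hij =>
    (hf.le_iff_le.1 (hσfg (hg hij))).lt_of_ne (σ.injective.ne hij.ne)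
  have eq_refl : hσmono.orderIsoOfSurjective σ σ.surjective = OrderIso.refl _ :=
    Subsingleton.elim _ _
  exact hσ (Equiv.ext fun i => DFunLike.congr_fun eq_refl i)

variable {R : Type*} [CommRing R] {n m N : ℕ}

lemma monomial_mul_genericMinor {ι : Type*} (d : ι × ι →₀ ℕ) (p q : Fin m → ι) :
    monomial d (1 : R) * genericMinor R p q =
      ∑ σ : Equiv.Perm (Fin m), ((Equiv.Perm.sign σ : ℤ) : R) •
        monomial (d + ∑ k, Finsupp.single (p (σ k), q k) 1) 1 := by
  rw [genericMinor, Matrix.det_apply', Finset.mul_sum]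
  refine Finset.sum_congr rfl fun σ _ => ?_
  simp only [Matrix.of_apply, X, ← monomial_sum_one]
  rw [mul_left_comm, monomial_mul, one_mul, smul_eq_C_mul, map_intCast]

/-- The straightening relation: the diagonal term of a minor has the largest weight
`∑ₖ pₖ qₖ` of all its terms. -/
lemma monomial_mem_minorIdeal_sup_standard (d : Fin N × Fin N →₀ ℕ) :
    monomial d (1 : R) ∈ (minorIdeal R n (Fin N)).restrictScalars R ⊔
      restrictSupport R {d | IsStandard n d} := by
  let wt : (Fin N × Fin N →₀ ℕ) →+ ℕ := Finsupp.weight fun z => (z.1 : ℕ) * z.2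
  induction hw : wt d using Nat.strong_induction_on generalizing d with
  | _ w ih =>
  subst hw
  by_cases hd : IsStandard n d
  · exact Submodule.mem_sup_right ((monomial_mem_restrictSupport _).2 (Or.inl hd))
  obtain ⟨c, hc, hlt⟩ := of_not_not hd
  have hp : StrictMono fun i => (c i).1 := Fin.strictMono_iff_lt_succ.2 fun i => (hlt i).1
  have hq : StrictMono fun i => (c i).2 := Fin.strictMono_iff_lt_succ.2 fun i => (hlt i).2
  have hc_inj : Function.Injective c := fun i j hij => hp.injective (congrArg Prod.fst hij)
  obtain ⟨d, rfl⟩ := exists_add_of_le (sum_single_one_le hc_inj hc)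
  have expand := monomial_mul_genericMinor (R := R) d (fun i => (c i).1) fun i => (c i).2
  rw [← Finset.add_sum_erase _ _ (Finset.mem_univ 1), ← sub_eq_iff_eq_add] at expand
  simp only [Equiv.Perm.sign_one, Units.val_one, Int.cast_one, one_smul,
    Equiv.Perm.one_apply] at expand
  rw [add_comm, ← expand]
  refine Submodule.sub_mem _ (Submodule.mem_sup_left ?_) (Submodule.sum_mem _ fun σ hσ => ?_)
  · exact Ideal.mul_mem_left _ _ (Ideal.subset_span ⟨_, _, rfl⟩)
  · refine Submodule.smul_mem _ _ (ih _ ?_ _ rfl)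
    have hσ1 : σ ≠ 1 := Finset.ne_of_mem_erase hσ
    have rearrangement := sum_comp_perm_mul_lt_of_strictMono (f := fun i => ((c i).1 : ℕ))
      (g := fun i => ((c i).2 : ℕ)) hp hq hσ1
    rw [map_add, map_add, add_comm]
    simpa [wt, map_sum, Finsupp.weight_single] using rearrangement

lemma exists_standard_sub_mem_minorIdeal (f : MvPolynomial (Fin N × Fin N) R) :
    ∃ g, (∀ d ∈ g.support, IsStandard n d) ∧ f - g ∈ minorIdeal R n (Fin N) := by
  have hf : f ∈ (minorIdeal R n (Fin N)).restrictScalars R ⊔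
      restrictSupport R {d | IsStandard n d} := by
    rw [f.as_sum]
    refine Submodule.sum_mem _ fun d _ => ?_
    rw [← mul_one (coeff d f), ← smul_eq_mul, ← smul_monomial]
    exact Submodule.smul_mem _ _ (monomial_mem_minorIdeal_sup_standard d)
  obtain ⟨h, hh, g, hg, rfl⟩ := Submodule.mem_sup.1 hf
  exact ⟨g, fun d hd => (mem_restrictSupport_iff _).1 hg hd, by simpa using hh⟩

end StandardMonomial

section CumulativeSum

variable {α : Type*} [Fintype α]

/-- The sum of `f` over the down-set of `z`. -/
def cumulativeSum [PartialOrder α] (f : α → ℕ) (z : α) : ℕ := ∑ w with w ≤ z, f w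

lemma cumulativeSum_injective [PartialOrder α] :
    Function.Injective (cumulativeSum : (α → ℕ) → α → ℕ) := fun f g hfg => by
  have eq_add (h : α → ℕ) (z) : cumulativeSum h z = h z + ∑ w with w < z, h w := by
    rw [cumulativeSum, ← Finset.sum_insert (a := z) (s := {w | w < z}) (by simp)]
    congr 1
    ext w
    simp [le_iff_eq_or_lt]
  funext z
  induction z using WellFoundedLT.induction with
  | _ z ih =>
  have hz := congrFun hfg z
  rwa [eq_add, eq_add, Finset.sum_congr rfl fun w hw => ih w (Finset.mem_filter.1 hw).2,
    add_left_inj] at hz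

lemma cumulativeSum_sum [PartialOrder α] {κ : Type*} (s : Finset κ) (f : κ → α → ℕ) (z : α) :
    cumulativeSum (∑ k ∈ s, f k) z = ∑ k ∈ s, cumulativeSum (f k) z := by
  simp only [cumulativeSum, Finset.sum_apply]
  exact Finset.sum_comm

variable {ι : Type*} [Fintype ι] [LinearOrder ι]

lemma sum_rows_add_sum_columns (f : ι × ι → ℕ) (s t : ι) :
    (∑ i with i ≤ s, ∑ j, f (i, j)) + (∑ j with j ≤ t, ∑ i, f (i, j)) +
      ∑ z with StrictlyNorthwest (s, t) z, f z = cumulativeSum f (s, t) + ∑ z, f z := by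
  have rows : ∑ i with i ≤ s, ∑ j, f (i, j) = ∑ z with z.1 ≤ s, f z := by
    simp only [Finset.sum_filter, Fintype.sum_prod_type]
    exact Finset.sum_congr rfl fun i _ => by split_ifs <;> simp
  have columns : ∑ j with j ≤ t, ∑ i, f (i, j) = ∑ z with z.2 ≤ t, f z := by
    simp only [Finset.sum_filter, Fintype.sum_prod_type_right]
    exact Finset.sum_congr rfl fun j _ => by split_ifs <;> simp
  simp only [rows, columns, cumulativeSum, Finset.sum_filter, ← Finset.sum_add_distrib]
  refine Finset.sum_congr rfl fun z _ => ?_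
  have hle : z ≤ (s, t) ↔ z.1 ≤ s ∧ z.2 ≤ t := Prod.le_def
  have hnw : StrictlyNorthwest (s, t) z ↔ ¬ z.1 ≤ s ∧ ¬ z.2 ≤ t := by
    simp only [StrictlyNorthwest, not_le]
  by_cases h1 : z.1 ≤ s <;> by_cases h2 : z.2 ≤ t <;> simp [hle, hnw, h1, h2]

/-- An antichain that meets the down-set of `(s, t)` avoids the opposite quadrant, so it is covered
by the rows up to `s` and the columns up to `t`. -/
lemma cumulativeSum_le_of_antichain {f g : ι × ι → ℕ}
    (hf : ∀ z w, f z ≠ 0 → f w ≠ 0 → ¬ StrictlyNorthwest z w)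
    (hrow : ∀ i, ∑ j, f (i, j) = ∑ j, g (i, j)) (hcol : ∀ j, ∑ i, f (i, j) = ∑ i, g (i, j)) :
    cumulativeSum f ≤ cumulativeSum g := by
  rintro ⟨s, t⟩
  rcases eq_or_ne (cumulativeSum f (s, t)) 0 with h0 | h0
  · exact h0 ▸ Nat.zero_le _
  obtain ⟨z, hz, hfz⟩ := Finset.exists_ne_zero_of_sum_ne_zero h0
  have hzst : z ≤ (s, t) := by simpa only [Finset.mem_filter_univ] using hz
  have opposite_quadrant : ∑ w with StrictlyNorthwest (s, t) w, f w = 0 := by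
    refine Finset.sum_eq_zero fun w hw => by_contra fun hfw => hf z w hfz hfw ?_
    have hstw := (Finset.mem_filter.1 hw).2
    exact ⟨hzst.1.trans_lt hstw.1, hzst.2.trans_lt hstw.2⟩
  have total : ∑ w, f w = ∑ w, g w := by
    simp only [Fintype.sum_prod_type, hrow]
  have hf_eq := sum_rows_add_sum_columns f s t
  have hg_eq := sum_rows_add_sum_columns g s t
  simp only [hrow, hcol, opposite_quadrant, total] at hf_eq
  lia

end CumulativeSum

section StandardMonomialIndependence

variable {R : Type*} {n : ℕ} {ι : Type*}

/-- The exponent of the monomial `∏ₖ ∏₍ᵢ,ⱼ₎ (aᵢₖ bⱼₖ) ^ Mₖ(i, j)`: the row and column sums of the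
matrices `Mₖ`. -/
def marginals [Fintype ι] (M : Fin n → ι × ι →₀ ℕ) : ι × (Fin n ⊕ Fin n) →₀ ℕ :=
  Finsupp.equivFunOnFinite.symm fun
    | (i, Sum.inl k) => ∑ j, M k (i, j)
    | (j, Sum.inr k) => ∑ i, M k (i, j)

lemma marginals_zero [Fintype ι] : marginals (0 : Fin n → ι × ι →₀ ℕ) = 0 := by
  ext ⟨i, k | k⟩ <;> simp [marginals]

lemma marginals_add [Fintype ι] (M M' : Fin n → ι × ι →₀ ℕ) :
    marginals (M + M') = marginals M + marginals M' := by
  ext ⟨i, k | k⟩ <;> simp [marginals, Finset.sum_add_distrib]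

lemma marginals_single [Fintype ι] (k : Fin n) (z : ι × ι) :
    marginals (Pi.single k (Finsupp.single z 1)) =
      Finsupp.single (z.1, Sum.inl k) 1 + Finsupp.single (z.2, Sum.inr k) 1 := by
  obtain ⟨i, j⟩ := z
  ext ⟨i', k' | k'⟩ <;> rcases eq_or_ne k' k with rfl | hk <;>
    simp [marginals, Finsupp.single_apply, ite_and, *, Ne.symm]

lemma pairing_eq_sum_monomial_marginals [CommSemiring R] [Fintype ι] (z : ι × ι) :
    pairing R n z.1 z.2 =
      ∑ k, monomial (marginals (Pi.single k (Finsupp.single z 1))) 1 := by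
  simp only [pairing, marginals_single, X, monomial_mul, mul_one]

lemma finsupp_nat_induction {α : Type*} {motive : (α →₀ ℕ) → Prop} (d : α →₀ ℕ)
    (zero : motive 0) (add_single : ∀ d a, motive d → motive (d + Finsupp.single a 1)) :
    motive d := by
  induction d using Finsupp.induction with
  | zero => exact zero
  | single_add a c d _ _ ih =>
    rw [add_comm]
    clear * - ih add_single
    induction c with
    | zero => simpa using ih
    | succ c ihc => rw [Finsupp.single_add, ← add_assoc]; exact add_single _ _ ihc

lemma genericProduct_monomial_add [CommSemiring R] (m m' : ι × ι →₀ ℕ) :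
    genericProduct R n ι (monomial (m + m') 1) =
      genericProduct R n ι (monomial m 1) * genericProduct R n ι (monomial m' 1) := by
  rw [← map_mul, monomial_mul, mul_one]

lemma genericProduct_monomial_single [CommSemiring R] (z : ι × ι) :
    genericProduct R n ι (monomial (Finsupp.single z 1) 1) = pairing R n z.1 z.2 :=
  genericProduct_X z

lemma exists_marginals_of_mem_support_genericProduct [CommSemiring R] [Fintype ι]
    {m : ι × ι →₀ ℕ} {d : ι × (Fin n ⊕ Fin n) →₀ ℕ}
    (hd : d ∈ (genericProduct R n ι (monomial m 1)).support) :
    ∃ M : Fin n → ι × ι →₀ ℕ, ∑ k, M k = m ∧ marginals M = d := by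
  induction m using finsupp_nat_induction generalizing d with
  | zero =>
    have hd0 : d = 0 := by
      simpa using support_monomial_subset (s := 0) (a := (1 : R)) (by simpa using hd)
    exact ⟨0, by simp, by rw [marginals_zero, hd0]⟩
  | add_single m z ih =>
    rw [genericProduct_monomial_add, genericProduct_monomial_single] at hd
    obtain ⟨d', hd', e, he, rfl⟩ := Finset.mem_add.1 (support_mul _ _ hd)
    obtain ⟨M, rfl, rfl⟩ := ih hd'
    rw [pairing_eq_sum_monomial_marginals] at he
    obtain ⟨k, -, hk⟩ := Finset.mem_biUnion.1 (support_sum he)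
    refine ⟨M + Pi.single k (Finsupp.single z 1), ?_, ?_⟩
    · simp [Finset.sum_add_distrib]
    · rw [marginals_add, Finset.mem_singleton.1 (support_monomial_subset hk)]

lemma coeff_add_mul_ne_zero {σ : Type*} {f g : MvPolynomial σ ℕ} {d e : σ →₀ ℕ}
    (hf : coeff d f ≠ 0) (hg : coeff e g ≠ 0) : coeff (d + e) (f * g) ≠ 0 := fun h => by
  rw [coeff_mul, Finset.sum_eq_zero_iff] at h
  exact mul_ne_zero hf hg (h (d, e) (Finset.HasAntidiagonal.mem_antidiagonal.2 rfl))

lemma coeff_marginals_single_genericProduct_ne_zero [Fintype ι] (k : Fin n) (m : ι × ι →₀ ℕ) :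
    coeff (marginals (Pi.single k m)) (genericProduct ℕ n ι (monomial m 1)) ≠ 0 := by
  induction m using finsupp_nat_induction with
  | zero => simp [marginals_zero]
  | add_single m z ih =>
    rw [Pi.single_add, marginals_add, genericProduct_monomial_add]
    refine coeff_add_mul_ne_zero ih fun h => ?_
    rw [genericProduct_monomial_single, pairing_eq_sum_monomial_marginals, coeff_sum,
      Finset.sum_eq_zero_iff] at h
    simpa using h k (Finset.mem_univ k)

lemma coeff_marginals_genericProduct_ne_zero [CommSemiring R] [CharZero R] [Fintype ι]
    (M : Fin n → ι × ι →₀ ℕ) :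
    coeff (marginals M) (genericProduct R n ι (monomial (∑ k, M k) 1)) ≠ 0 := by
  have over_nat (s : Finset (Fin n)) : coeff (marginals (∑ k ∈ s, Pi.single k (M k)))
      (genericProduct ℕ n ι (monomial (∑ k ∈ s, M k) 1)) ≠ 0 := by
    induction s using Finset.induction_on with
    | empty => simp [marginals_zero]
    | insert k s hk ih =>
      rw [Finset.sum_insert hk, Finset.sum_insert hk, marginals_add, genericProduct_monomial_add]
      exact coeff_add_mul_ne_zero (coeff_marginals_single_genericProduct_ne_zero k _) ih
  have base_change : genericProduct R n ι (monomial (∑ k, M k) 1) =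
      map (Nat.castRingHom R) (genericProduct ℕ n ι (monomial (∑ k, M k) 1)) := by
    rw [map_genericProduct, map_monomial, Nat.coe_castRingHom, Nat.cast_one]
  rw [base_change, coeff_map]
  exact Nat.cast_ne_zero.2 (by simpa only [Finset.univ_sum_single] using over_nat Finset.univ)

lemma IsStandard.exists_antichain_decomposition [LT ι] {m : ι × ι →₀ ℕ}
    (hm : IsStandard n m) : ∃ M : Fin n → ι × ι →₀ ℕ, ∑ k, M k = m ∧
      ∀ k z w, M k z ≠ 0 → M k w ≠ 0 → ¬ StrictlyNorthwest z w := by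
  obtain ⟨c, hlt, hc⟩ := exists_coloring_of_not_hasChain hm
  refine ⟨fun k => m.filter (c · = k), ?_, fun k z w hz hw => ?_⟩
  · ext z
    simp only [Finsupp.finsetSum_apply, Finsupp.filter_apply]
    by_cases hz : z ∈ m.support
    · rw [Finset.sum_eq_single ⟨c z, hlt z hz⟩ (fun k _ hk => if_neg fun h => hk (Fin.ext h.symm))
        (fun h => absurd (Finset.mem_univ _) h), if_pos rfl]
    · simp [Finsupp.notMem_support_iff.1 hz]
  · obtain ⟨hzk, hz⟩ : c z = k ∧ m z ≠ 0 := by simpa [Finsupp.filter_apply] using hz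
    obtain ⟨hwk, hw⟩ : c w = k ∧ m w ≠ 0 := by simpa [Finsupp.filter_apply] using hw
    exact hc z (Finsupp.mem_support_iff.2 hz) w (Finsupp.mem_support_iff.2 hw) (hzk.trans hwk.symm)

lemma cumulativeSum_sum_le_of_marginals_eq [Fintype ι] [LinearOrder ι]
    {M M' : Fin n → ι × ι →₀ ℕ}
    (hM : ∀ k z w, M k z ≠ 0 → M k w ≠ 0 → ¬ StrictlyNorthwest z w)
    (h : marginals M = marginals M') :
    cumulativeSum ⇑(∑ k, M k) ≤ cumulativeSum ⇑(∑ k, M' k) := fun z => by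
  simp only [Finsupp.coe_finsetSum, cumulativeSum_sum]
  refine Finset.sum_le_sum fun k _ => cumulativeSum_le_of_antichain (hM k) ?_ ?_ z
  · exact fun i => DFunLike.congr_fun h (i, Sum.inl k)
  · exact fun j => DFunLike.congr_fun h (j, Sum.inr k)

lemma eq_zero_of_isStandard_of_genericProduct_eq_zero [CommRing R] [IsDomain R] [CharZero R]
    [Finite ι] [LinearOrder ι] {f : MvPolynomial (ι × ι) R}
    (hf : ∀ m ∈ f.support, IsStandard n m) (h0 : genericProduct R n ι f = 0) : f = 0 := by
  have := Fintype.ofFinite ι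
  by_contra hne
  obtain ⟨m, hm, hmax⟩ := f.support.exists_maximalFor (fun m : ι × ι →₀ ℕ => cumulativeSum m)
    (support_nonempty.2 hne)
  obtain ⟨M, rfl, hM⟩ := (hf m hm).exists_antichain_decomposition
  have unique (m') (hm' : m' ∈ f.support) (hne : m' ≠ ∑ k, M k) :
      coeff (marginals M) (genericProduct R n ι (monomial m' 1)) = 0 := by
    by_contra hmem
    obtain ⟨M', rfl, hM'⟩ :=
      exists_marginals_of_mem_support_genericProduct (mem_support_iff.2 hmem)
    have hle := cumulativeSum_sum_le_of_marginals_eq hM hM'.symm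
    exact hne (DFunLike.coe_injective (cumulativeSum_injective ((hmax hm' hle).antisymm hle)))
  have expand : coeff (marginals M) (genericProduct R n ι f) =
      ∑ m' ∈ f.support,
        coeff m' f * coeff (marginals M) (genericProduct R n ι (monomial m' 1)) := by
    conv_lhs => rw [f.as_sum, map_sum, coeff_sum]
    refine Finset.sum_congr rfl fun m' _ => ?_
    rw [← mul_one (coeff m' f), ← smul_eq_mul, ← smul_monomial, map_smul, coeff_smul]
    simp only [smul_eq_mul, mul_one]
  rw [h0, coeff_zero, Finset.sum_eq_single_of_mem _ hm fun m' hm' hne => by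
    rw [unique m' hm' hne, mul_zero]] at expand
  exact mul_ne_zero (mem_support_iff.1 hm) (coeff_marginals_genericProduct_ne_zero M) expand.symm

theorem ker_genericProduct_fin [CommRing R] [IsDomain R] [CharZero R] (n N : ℕ) :
    RingHom.ker (genericProduct R n (Fin N)) = minorIdeal R n (Fin N) := by
  refine le_antisymm (fun f hf => ?_) minorIdeal_le_ker_genericProduct
  obtain ⟨g, hg, hfg⟩ := exists_standard_sub_mem_minorIdeal (n := n) f
  have hg0 : genericProduct R n (Fin N) g = 0 := by
    have hsub := RingHom.mem_ker.1 (minorIdeal_le_ker_genericProduct hfg)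
    rwa [map_sub, RingHom.mem_ker.1 hf, zero_sub, neg_eq_zero] at hsub
  rwa [eq_zero_of_isStandard_of_genericProduct_eq_zero hg hg0, sub_zero] at hfg

end StandardMonomialIndependence

section FischerForm

variable {R : Type*} {σ : Type*}

/-- The product of the factorials of the entries of an exponent. -/
def exponentFactorial (α : σ →₀ ℕ) : ℕ := α.prod fun _ k => k.factorial

lemma exponentFactorial_pos (α : σ →₀ ℕ) : 0 < exponentFactorial α :=
  Finset.prod_pos fun s _ => (α s).factorial_pos

lemma exponentFactorial_add_single (α : σ →₀ ℕ) (s : σ) :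
    exponentFactorial (α + Finsupp.single s 1) = (α s + 1) * exponentFactorial α := by
  rw [exponentFactorial, exponentFactorial, ← Finsupp.mul_prod_erase' _ s _ fun _ => rfl,
    ← Finsupp.mul_prod_erase' α s _ fun _ => rfl, ← mul_assoc]
  congr 1
  · simp [Nat.factorial_succ]
  · rw [Finsupp.erase_add, Finsupp.erase_single, add_zero]

/-- The Fischer form `⟨f, g⟩ = (f(∂) g)(0)`: the bilinear form in which distinct monomials are
orthogonal and `⟨X ^ α, X ^ α⟩ = α!`. -/
def fischerForm (R σ : Type*) [CommSemiring R] : LinearMap.BilinForm R (MvPolynomial σ R) :=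
  (basisMonomials σ R).constr R fun α => (exponentFactorial α : R) • lcoeff R α

lemma fischerForm_monomial [CommSemiring R] (α : σ →₀ ℕ) (c : R) (g : MvPolynomial σ R) :
    fischerForm R σ (monomial α c) g = c * (exponentFactorial α * coeff α g) := by
  have on_basis : fischerForm R σ (monomial α 1) = (exponentFactorial α : R) • lcoeff R α := by
    simpa only [coe_basisMonomials, fischerForm] using
      (basisMonomials σ R).constr_basis R (fun α => (exponentFactorial α : R) • lcoeff R α) α
  rw [← mul_one c, ← smul_eq_mul, ← smul_monomial, map_smul, on_basis]
  simp

lemma fischerForm_comm [CommSemiring R] (f g : MvPolynomial σ R) :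
    fischerForm R σ f g = fischerForm R σ g f := by
  induction f using MvPolynomial.induction_on' with
  | add f f' hf hf' => rw [map_add, map_add, LinearMap.add_apply, hf, hf']
  | monomial α c =>
    induction g using MvPolynomial.induction_on' with
    | add g g' hg hg' => rw [map_add, map_add, LinearMap.add_apply, hg, hg']
    | monomial β b =>
      simp only [fischerForm_monomial, coeff_monomial]
      rcases eq_or_ne α β with rfl | hne
      · simp only [if_true]
        ring
      · simp [hne, hne.symm]

lemma fischerForm_X_mul [CommSemiring R] (s : σ) (f g : MvPolynomial σ R) :
    fischerForm R σ (X s * f) g = fischerForm R σ f (pderiv s g) := by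
  induction f using MvPolynomial.induction_on' with
  | add f f' hf hf' => simp only [mul_add, map_add, LinearMap.add_apply, hf, hf']
  | monomial α c =>
    rw [X, monomial_mul, one_mul, add_comm, fischerForm_monomial, fischerForm_monomial,
      coeff_pderiv, exponentFactorial_add_single]
    push_cast
    ring

lemma fischerForm_map [CommSemiring R] {S : Type*} [CommSemiring S] (φ : R →+* S)
    (f g : MvPolynomial σ R) :
    fischerForm S σ (map φ f) (map φ g) = φ (fischerForm R σ f g) := by
  induction f using MvPolynomial.induction_on' with
  | add f f' hf hf' => simp only [map_add, LinearMap.add_apply, hf, hf']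
  | monomial α c =>
    simp only [map_monomial, fischerForm_monomial, coeff_map, map_mul, map_natCast]

lemma eq_zero_of_fischerForm_eq_zero [CommRing R] [IsDomain R] [CharZero R] {f : MvPolynomial σ R}
    (hf : ∀ g, fischerForm R σ f g = 0) : f = 0 := by
  ext α
  have hα : (1 : R) * (exponentFactorial α * coeff α f) = 0 := by
    rw [← fischerForm_monomial, fischerForm_comm, hf]
  simpa [(exponentFactorial_pos α).ne'] using hα

lemma fischerForm_eq_zero_of_isHomogeneous [CommSemiring R] {f g : MvPolynomial σ R} {d e : ℕ}
    (hf : f.IsHomogeneous d) (hg : g.IsHomogeneous e) (hde : d ≠ e) :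
    fischerForm R σ f g = 0 := by
  rw [f.as_sum, map_sum, LinearMap.sum_apply]
  refine Finset.sum_eq_zero fun α hα => ?_
  have degree_eq : α.degree = d := by
    rw [Finsupp.degree_eq_weight_one]
    exact hf (mem_support_iff.1 hα)
  rw [fischerForm_monomial, hg.coeff_eq_zero (degree_eq ▸ hde), mul_zero, mul_zero]

lemma eq_zero_of_fischerForm_self_eq_zero [Field R] [LinearOrder R] [IsStrictOrderedRing R]
    {f : MvPolynomial σ R} (hf : fischerForm R σ f f = 0) : f = 0 := by
  by_contra hne
  have expand : fischerForm R σ f f =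
      ∑ α ∈ f.support, coeff α f * (exponentFactorial α * coeff α f) := by
    conv_lhs => enter [1]; rw [f.as_sum, map_sum]
    simp only [LinearMap.sum_apply, fischerForm_monomial]
  refine (Finset.sum_pos (fun α hα => ?_) (support_nonempty.2 hne)).ne' (expand ▸ hf)
  rw [mul_left_comm]
  exact mul_pos (Nat.cast_pos.2 (exponentFactorial_pos α))
    (mul_self_pos.2 (mem_support_iff.1 hα))

lemma sup_orthogonal_eq_top_of_anisotropic {K V : Type*} [Field K] [AddCommGroup V] [Module K V]
    {B : LinearMap.BilinForm K V} (hB : B.IsSymm) (W : Submodule K V) [Module.Finite K W]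
    (hW : ∀ w ∈ W, B w w = 0 → w = 0) : W ⊔ B.orthogonal W = ⊤ := by
  have nondegenerate : (B.restrict W).Nondegenerate :=
    ⟨fun w hw => Subtype.ext (hW w w.2 (hw w)), fun w hw => Subtype.ext (hW w w.2 (hw w))⟩
  refine eq_top_iff.2 fun g _ => ?_
  let h : W := ((B.restrict W).toDual nondegenerate).symm ((B g).domRestrict W)
  have apply_h (w : W) : B h w = B g w :=
    (B.restrict W).apply_toDual_symm_apply (hB := nondegenerate) ((B g).domRestrict W) w
  refine Submodule.mem_sup.2 ⟨h, h.2, g - h, fun w hw => ?_, add_sub_cancel _ _⟩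
  rw [← hB.eq, map_sub, LinearMap.sub_apply, apply_h ⟨w, hw⟩, sub_self]

lemma mem_orthogonal_span_iff {V : Type*} [CommSemiring R] [AddCommMonoid V] [Module R V]
    {B : LinearMap.BilinForm R V} {S : Set V} {x : V} :
    x ∈ B.orthogonal (Submodule.span R S) ↔ ∀ s ∈ S, B s x = 0 := by
  refine ⟨fun h s hs => h s (Submodule.subset_span hs), fun h s hs => ?_⟩
  have span_le : Submodule.span R S ≤ LinearMap.ker (B.flip x) := Submodule.span_le.2 h
  exact span_le hs

lemma submodule_eq_top_of_monomial_mem [CommSemiring R] {M : Submodule R (MvPolynomial σ R)}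
    (hM : ∀ α, monomial α 1 ∈ M) : M = ⊤ := by
  rw [eq_top_iff, ← (basisMonomials σ R).span_eq, coe_basisMonomials, Submodule.span_le]
  exact Set.range_subset_iff.2 hM

/-- Homogeneity lets the orthogonal projection be computed in each degree separately, where the
spaces are finite-dimensional. -/
lemma span_sup_orthogonal_fischerForm_eq_top [Finite σ] [Field R] [LinearOrder R]
    [IsStrictOrderedRing R] {S : Set (MvPolynomial σ R)}
    (hS : ∀ f ∈ S, ∃ d, f.IsHomogeneous d) :
    Submodule.span R S ⊔ (fischerForm R σ).orthogonal (Submodule.span R S) = ⊤ := by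
  refine submodule_eq_top_of_monomial_mem fun α => ?_
  let Wα := Submodule.span R {f ∈ S | f.IsHomogeneous α.degree}
  have Wα_le : Wα ≤ homogeneousSubmodule σ R α.degree := Submodule.span_le.2 fun f hf => hf.2
  have : Module.Finite R (homogeneousSubmodule σ R α.degree) :=
    Module.Finite.iff_fg.2 (homogeneousSubmodule_fg σ R _)
  have : Module.Finite R Wα := Submodule.finiteDimensional_of_le Wα_le
  have sup_eq_top := sup_orthogonal_eq_top_of_anisotropic ⟨fischerForm_comm⟩ Wα
    fun w _ => eq_zero_of_fischerForm_self_eq_zero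
  obtain ⟨h, hh, r, hr, hhr⟩ :=
    Submodule.mem_sup.1 (sup_eq_top.symm ▸ Submodule.mem_top : monomial α (1 : R) ∈ _)
  have r_isHomogeneous : r.IsHomogeneous α.degree := by
    rw [eq_sub_of_add_eq' hhr]
    exact (isHomogeneous_monomial _ rfl).sub (Wα_le hh)
  refine Submodule.mem_sup.2 ⟨h, Submodule.span_mono (Set.sep_subset S _) hh, r, ?_, hhr⟩
  refine mem_orthogonal_span_iff.2 fun f hf => ?_
  obtain ⟨d, hd⟩ := hS f hf
  rcases eq_or_ne d α.degree with rfl | hne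
  · exact mem_orthogonal_span_iff.1 hr f ⟨hf, hd⟩
  · exact fischerForm_eq_zero_of_isHomogeneous hd r_isHomogeneous hne

lemma map_mem_span_image_map {K : Type*} [CommSemiring R] [CommSemiring K] (φ : R →+* K)
    {S : Set (MvPolynomial σ R)} {f : MvPolynomial σ R} (hf : f ∈ Submodule.span R S) :
    map φ f ∈ Submodule.span K (map φ '' S) := by
  induction hf using Submodule.span_induction with
  | mem f hf => exact Submodule.subset_span ⟨f, hf, rfl⟩
  | zero => rw [map_zero]; exact Submodule.zero_mem _
  | add f g _ _ hf hg => rw [map_add]; exact Submodule.add_mem _ hf hg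
  | smul c f _ hf =>
    rw [smul_eq_C_mul, map_mul, map_C, ← smul_eq_C_mul]
    exact Submodule.smul_mem _ _ hf

lemma span_map_sup_orthogonal_fischerForm_eq_top {K : Type*} [CommSemiring R] [CommSemiring K]
    (φ : R →+* K) {S : Set (MvPolynomial σ R)}
    (hS : Submodule.span R S ⊔ (fischerForm R σ).orthogonal (Submodule.span R S) = ⊤) :
    Submodule.span K (map φ '' S) ⊔
      (fischerForm K σ).orthogonal (Submodule.span K (map φ '' S)) = ⊤ := by
  refine submodule_eq_top_of_monomial_mem fun α => ?_
  obtain ⟨h, hh, r, hr, hhr⟩ :=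
    Submodule.mem_sup.1 (hS.symm ▸ Submodule.mem_top : monomial α (1 : R) ∈ _)
  refine Submodule.mem_sup.2 ⟨map φ h, ?_, map φ r, ?_, ?_⟩
  · exact map_mem_span_image_map φ hh
  · rw [mem_orthogonal_span_iff, Set.forall_mem_image]
    exact fun f hf => by rw [fischerForm_map, mem_orthogonal_span_iff.1 hr f hf, map_zero]
  · rw [← map_add, hhr, map_monomial, map_one]

end FischerForm

section Purity

variable {R K : Type*} {n : ℕ} {ι : Type*}

/-- The orthogonal projection to `W` commutes with multiplication by the `q i`, since the adjoint
operators `D i` preserve `W`. -/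
lemma exists_mem_sum_mul_eq_sum_mul {A κ : Type*} [CommRing K] [CommRing A] [Algebra K A]
    [Fintype κ] {B : LinearMap.BilinForm K A} (hB : B.IsSymm) (hB0 : B.SeparatingLeft)
    {W : Submodule K A} (hW : W ⊔ B.orthogonal W = ⊤) {q : κ → A} {D : κ → A → A}
    (hD : ∀ i f g, B (q i * f) g = B f (D i g)) (hDW : ∀ i, ∀ w ∈ W, D i w ∈ W)
    (hqW : ∀ i, ∀ w ∈ W, q i * w ∈ W) {g : κ → A} (hg : ∑ i, q i * g i ∈ W) :
    ∃ h : κ → A, (∀ i, h i ∈ W) ∧ ∑ i, q i * g i = ∑ i, q i * h i := by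
  have decompose (a : A) : ∃ h ∈ W, ∃ r ∈ B.orthogonal W, h + r = a :=
    Submodule.mem_sup.1 (hW.symm ▸ Submodule.mem_top)
  choose h hh r hr hhr using fun i => decompose (g i)
  refine ⟨h, hh, ?_⟩
  have sum_eq : ∑ i, q i * g i = ∑ i, q i * h i + ∑ i, q i * r i := by
    simp only [← Finset.sum_add_distrib, ← mul_add, hhr]
  have remainder_mem : ∑ i, q i * r i ∈ W := by
    rw [eq_sub_of_add_eq' sum_eq.symm]
    exact W.sub_mem hg (W.sum_mem fun i _ => hqW i _ (hh i))
  have remainder_orthogonal (w) (hw : w ∈ W) : B (∑ i, q i * r i) w = 0 := by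
    rw [map_sum, LinearMap.sum_apply]
    exact Finset.sum_eq_zero fun i _ => by rw [hD, ← hB.eq]; exact hr i _ (hDW i w hw)
  have remainder_eq_zero : ∑ i, q i * r i = 0 := hB0 _ fun a => by
    obtain ⟨w, hw, s, hs, rfl⟩ := decompose a
    rw [map_add, remainder_orthogonal w hw, zero_add]
    exact hs _ remainder_mem
  rw [sum_eq, remainder_eq_zero, add_zero]

lemma derivation_aeval {A σ : Type*} [Fintype σ] [CommSemiring R] [CommSemiring A] [Algebra R A]
    (D : Derivation R A A) (g : σ → A) (f : MvPolynomial σ R) :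
    D (aeval g f) = ∑ s, aeval g (pderiv s f) * D (g s) := by
  induction f using MvPolynomial.induction_on with
  | C c => simp
  | add f f' hf hf' => simp only [map_add, hf, hf', add_mul, Finset.sum_add_distrib]
  | mul_X f s hf =>
    have hX : ∑ t, aeval g (f * pderiv t (X s)) * D (g t) = aeval g f * D (g s) := by
      rw [Finset.sum_eq_single_of_mem s (Finset.mem_univ s) fun t _ ht => by
        rw [pderiv_X_of_ne ht.symm, mul_zero, map_zero, zero_mul], pderiv_X_self, mul_one]
    simp only [map_mul, aeval_X, Derivation.leibniz, smul_eq_mul, hf, map_add, add_mul,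
      Finset.sum_add_distrib, Finset.mul_sum] at hX ⊢
    rw [hX]
    congr 1
    exact Finset.sum_congr rfl fun t _ => by ring

lemma pderiv_inl_pairing [CommSemiring R] (i j l : ι) (k : Fin n) :
    pderiv (i, Sum.inl k) (pairing R n j l) = if j = i then X (l, Sum.inr k) else 0 := by
  simp [pairing, pderiv_X, Pi.single_apply, ite_and]

lemma pderiv_inr_pairing [CommSemiring R] (i j l : ι) (k : Fin n) :
    pderiv (i, Sum.inr k) (pairing R n j l) = if l = i then X (j, Sum.inl k) else 0 := by
  simp [pairing, pderiv_X, Pi.single_apply, ite_and]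

lemma pderiv_inl_genericProduct [Fintype ι] [CommSemiring R] (i : ι) (k : Fin n)
    (f : MvPolynomial (ι × ι) R) : pderiv (i, Sum.inl k) (genericProduct R n ι f) =
      ∑ j, genericProduct R n ι (pderiv (i, j) f) * X (j, Sum.inr k) := by
  rw [genericProduct, derivation_aeval, Fintype.sum_prod_type]
  simp only [pderiv_inl_pairing, mul_ite, mul_zero, Finset.sum_ite_irrel, Finset.sum_const_zero,
    Finset.sum_ite_eq', Finset.mem_univ, if_true]

lemma pderiv_inr_genericProduct [Fintype ι] [CommSemiring R] (j : ι) (k : Fin n)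
    (f : MvPolynomial (ι × ι) R) : pderiv (j, Sum.inr k) (genericProduct R n ι f) =
      ∑ i, genericProduct R n ι (pderiv (i, j) f) * X (i, Sum.inl k) := by
  rw [genericProduct, derivation_aeval, Fintype.sum_prod_type_right]
  simp only [pderiv_inr_pairing, mul_ite, mul_zero, Finset.sum_ite_irrel, Finset.sum_const_zero,
    Finset.sum_ite_eq', Finset.mem_univ, if_true]

/-- The operator adjoint to multiplication by `pairing R n i i` for the Fischer form. -/
def pairingLaplacian (R : Type*) [CommSemiring R] (n : ℕ) (i : ι)
    (f : MvPolynomial (ι × (Fin n ⊕ Fin n)) R) : MvPolynomial (ι × (Fin n ⊕ Fin n)) R :=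
  ∑ k, pderiv (i, Sum.inl k) (pderiv (i, Sum.inr k) f)

lemma fischerForm_pairing_mul [CommSemiring R] (i : ι)
    (f g : MvPolynomial (ι × (Fin n ⊕ Fin n)) R) :
    fischerForm R _ (pairing R n i i * f) g = fischerForm R _ f (pairingLaplacian R n i g) := by
  simp only [pairing, pairingLaplacian, Finset.sum_mul, map_sum, LinearMap.sum_apply]
  exact Finset.sum_congr rfl fun k _ => by
    rw [mul_comm (X _), mul_assoc, fischerForm_X_mul, fischerForm_X_mul]

lemma pairingLaplacian_genericProduct [Fintype ι] [CommSemiring R] (i : ι)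
    (f : MvPolynomial (ι × ι) R) :
    pairingLaplacian R n i (genericProduct R n ι f) = genericProduct R n ι
      (n • pderiv (i, i) f + ∑ j, ∑ l, X (j, l) * pderiv (i, l) (pderiv (j, i) f)) := by
  have first_order (k : Fin n) : ∑ j, genericProduct R n ι (pderiv (j, i) f) *
      pderiv (i, Sum.inl k) (X (j, Sum.inl k)) = genericProduct R n ι (pderiv (i, i) f) := by
    simp [pderiv_X, Pi.single_apply]
  have second_order (j l : ι) : ∑ k, X (j, Sum.inl k) *
      (genericProduct R n ι (pderiv (i, l) (pderiv (j, i) f)) * X (l, Sum.inr k)) =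
      genericProduct R n ι (X (j, l) * pderiv (i, l) (pderiv (j, i) f)) := by
    rw [map_mul, genericProduct_X, pairing, Finset.sum_mul]
    exact Finset.sum_congr rfl fun k _ => by ring
  simp only [pairingLaplacian, pderiv_inr_genericProduct, map_sum, Derivation.leibniz, smul_eq_mul,
    pderiv_inl_genericProduct, Finset.sum_add_distrib, first_order, Finset.sum_const,
    Finset.card_univ, Fintype.card_fin, map_add, map_nsmul, Finset.mul_sum, ← second_order]
  congr 1
  rw [Finset.sum_comm]
  exact Finset.sum_congr rfl fun j _ => Finset.sum_comm

lemma isHomogeneous_genericProduct_monomial [CommSemiring R] (m : ι × ι →₀ ℕ) :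
    (genericProduct R n ι (monomial m 1)).IsHomogeneous (2 * m.degree) := by
  refine (isHomogeneous_monomial 1 rfl).aeval _ fun z => ?_
  exact IsHomogeneous.sum _ _ _ fun k _ => (isHomogeneous_X R _).mul (isHomogeneous_X R _)

lemma range_genericProduct_eq_span [CommSemiring R] :
    LinearMap.range (genericProduct R n ι).toLinearMap =
      Submodule.span R (Set.range fun m => genericProduct R n ι (monomial m 1)) := by
  rw [LinearMap.range_eq_map, ← (basisMonomials (ι × ι) R).span_eq, Submodule.map_span,
    coe_basisMonomials, ← Set.range_comp]
  rfl

lemma range_genericProduct_sup_orthogonal_eq_top [Finite ι] [Field K] [CharZero K] :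
    LinearMap.range (genericProduct K n ι).toLinearMap ⊔
      (fischerForm K _).orthogonal (LinearMap.range (genericProduct K n ι).toLinearMap) = ⊤ := by
  have over_rat := span_sup_orthogonal_fischerForm_eq_top (R := ℚ)
    (S := Set.range fun m => genericProduct ℚ n ι (monomial m 1))
    (Set.forall_mem_range.2 fun m => ⟨_, isHomogeneous_genericProduct_monomial m⟩)
  have base_change := span_map_sup_orthogonal_fischerForm_eq_top (algebraMap ℚ K) over_rat
  rw [range_genericProduct_eq_span]
  simpa only [← Set.range_comp, Function.comp_def, map_genericProduct, map_monomial, map_one]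
    using base_change

/-- The ideal of the diagonal entries of the generic `ι × ι` matrix. -/
def diagonalIdeal (R : Type*) [CommRing R] (ι : Type*) : Ideal (MvPolynomial (ι × ι) R) :=
  Ideal.span (Set.range fun i => X (i, i))

lemma comap_genericProduct_diagonalPairingIdeal_le [Finite ι] [Field K] [CharZero K] :
    (diagonalPairingIdeal K n ι).comap (genericProduct K n ι) ≤
      RingHom.ker (genericProduct K n ι) ⊔ diagonalIdeal K ι := fun f hf => by
  have := Fintype.ofFinite ι
  obtain ⟨g, hg⟩ := Ideal.mem_span_range_iff_exists_fun.1 (Ideal.mem_comap.1 hf)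
  simp only [mul_comm (g _)] at hg
  obtain ⟨h, hh, hgh⟩ := exists_mem_sum_mul_eq_sum_mul
    (D := pairingLaplacian K n) (g := g) ⟨fischerForm_comm⟩
    (fun _ => eq_zero_of_fischerForm_eq_zero) range_genericProduct_sup_orthogonal_eq_top
    fischerForm_pairing_mul
    (by rintro i _ ⟨F, rfl⟩; exact ⟨_, (pairingLaplacian_genericProduct i F).symm⟩)
    (by rintro i _ ⟨F, rfl⟩; exact ⟨X (i, i) * F, by simp [genericProduct_X]⟩)
    (by rw [hg]; exact ⟨f, rfl⟩)
  choose F hF using hh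
  have sub_mem_ker : f - ∑ i, X (i, i) * F i ∈ RingHom.ker (genericProduct K n ι) := by
    simp only [AlgHom.toLinearMap_apply] at hF
    rw [RingHom.mem_ker, map_sub, ← hg, hgh, map_sum, sub_eq_zero]
    simp only [map_mul, genericProduct_X, hF]
  have sum_mem : ∑ i, X (i, i) * F i ∈ diagonalIdeal K ι :=
    Ideal.sum_mem _ fun i _ => Ideal.mul_mem_right _ _ (Ideal.subset_span ⟨i, rfl⟩)
  simpa using Submodule.add_mem_sup sub_mem_ker sum_mem

end Purity

section Reduction

variable {R K : Type*} {n : ℕ} {ι κ : Type*}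

lemma minorIdeal_sup_diagonalIdeal_le_comap_rename [CommRing R] (e : ι → κ) :
    minorIdeal R n ι ⊔ diagonalIdeal R ι ≤
      (minorIdeal R n κ ⊔ diagonalIdeal R κ).comap (rename (Prod.map e e)) := by
  refine sup_le (Ideal.span_le.2 ?_) (Ideal.span_le.2 ?_)
  · rintro _ ⟨p, q, rfl⟩
    refine Ideal.mem_sup_left (Ideal.subset_span ⟨e ∘ p, e ∘ q, ?_⟩)
    rw [map_genericMinor]
    simp only [rename_X, genericMinor, Prod.map_apply, Function.comp_apply]
  · rintro _ ⟨i, rfl⟩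
    exact Ideal.mem_sup_right (Ideal.subset_span ⟨e i, by simp only [rename_X, Prod.map_apply]⟩)

theorem comap_genericProduct_diagonalPairingIdeal_le_minorIdeal_sup [Field K] [CharZero K] :
    (diagonalPairingIdeal K n ι).comap (genericProduct K n ι) ≤
      minorIdeal K n ι ⊔ diagonalIdeal K ι := fun f hf => by
  obtain ⟨N, e, he, hrange⟩ :=
    ((f.vars.image Prod.fst) ∪ f.vars.image Prod.snd).finite_toSet.fin_param
  have subset_range : ↑f.vars ⊆ Set.range (Prod.map e e) := fun z hz => by
    rw [Set.range_prodMap, hrange]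
    simp only [Finset.coe_union, Finset.coe_image]
    exact ⟨Or.inl ⟨z, hz, rfl⟩, Or.inr ⟨z, hz, rfl⟩⟩
  obtain ⟨f, rfl⟩ := exists_rename_eq_of_vars_subset_range f _ (he.prodMap he) subset_range
  rw [Ideal.mem_comap, ← rename_genericProduct, ← Ideal.mem_comap,
    comap_rename_diagonalPairingIdeal he] at hf
  refine minorIdeal_sup_diagonalIdeal_le_comap_rename e ?_
  rw [← ker_genericProduct_fin]
  exact comap_genericProduct_diagonalPairingIdeal_le hf

end Reduction

section Nonvanishing

variable {R : Type*} [CommRing R] {n : ℕ} {ι : Type*}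

lemma eval_eq_zero_of_mem_diagonalPairingIdeal {c : ι × (Fin n ⊕ Fin n) → R}
    (hc : ∀ i k, c (i, Sum.inl k) * c (i, Sum.inr k) = 0)
    {f : MvPolynomial (ι × (Fin n ⊕ Fin n)) R} (hf : f ∈ diagonalPairingIdeal R n ι) :
    eval c f = 0 := by
  have le_ker : diagonalPairingIdeal R n ι ≤ RingHom.ker (eval c) := Ideal.span_le.2 <| by
    rintro _ ⟨i, rfl⟩
    simp [pairing, hc]
  exact le_ker hf

lemma det_leftMatrix_notMem_diagonalPairingIdeal [Nontrivial R] {p : Fin n → ι}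
    (hp : Function.Injective p) :
    (leftMatrix R n p).det ∉ diagonalPairingIdeal R n ι := fun hmem => by
  let c : ι × (Fin n ⊕ Fin n) → R := fun
    | (i, Sum.inl k) => if i = p k then 1 else 0
    | (_, Sum.inr _) => 0
  have eval_leftMatrix : (eval c).mapMatrix (leftMatrix R n p) = 1 := by
    ext i k
    simp [leftMatrix, c, hp.eq_iff, Matrix.one_apply]
  have eval_det := eval_eq_zero_of_mem_diagonalPairingIdeal (c := c)
    (fun _ _ => mul_zero _) hmem
  rw [RingHom.map_det, eval_leftMatrix, Matrix.det_one] at eval_det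
  exact one_ne_zero eval_det

lemma det_rightMatrix_notMem_diagonalPairingIdeal [Nontrivial R] {q : Fin n → ι}
    (hq : Function.Injective q) :
    (rightMatrix R n q).det ∉ diagonalPairingIdeal R n ι := fun hmem => by
  let c : ι × (Fin n ⊕ Fin n) → R := fun
    | (_, Sum.inl _) => 0
    | (j, Sum.inr k) => if j = q k then 1 else 0
  have eval_rightMatrix : (eval c).mapMatrix (rightMatrix R n q) = 1 := by
    ext j k
    simp [rightMatrix, c, hq.eq_iff, Matrix.one_apply]
  have eval_det := eval_eq_zero_of_mem_diagonalPairingIdeal (c := c)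
    (fun _ _ => zero_mul _) hmem
  rw [RingHom.map_det, eval_rightMatrix, Matrix.det_one] at eval_det
  exact one_ne_zero eval_det

end Nonvanishing

section SwappingRing

variable {K : Type} [Field K] {P : Set Circle1} {n m : ℕ}

/-- The presentation of the swapping ring as the quotient of the polynomial ring in all pairs
`(x, y)` by the diagonal pairs `(x, x)`. -/
def killDiagonal (K : Type) [Field K] (P : Set Circle1) :
    MvPolynomial (↥P × ↥P) K →ₐ[K] SwapRing K P :=
  aeval fun z => gen K P z.1 z.2

lemma killDiagonal_X (x y : ↥P) : killDiagonal K P (X (x, y)) = gen K P x y :=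
  aeval_X _ _

lemma gen_self (x : ↥P) : gen K P x x = 0 := dif_neg (not_not.2 rfl)

lemma killDiagonal_surjective : Function.Surjective (killDiagonal K P) := fun f => by
  refine ⟨rename Subtype.val f, ?_⟩
  have gen_val (z : SwapIdx P) : gen K P z.1.1 z.1.2 = X z := dif_pos z.2
  simp only [killDiagonal, aeval_rename, Function.comp_def, gen_val, aeval_X_left_apply]

lemma killDiagonal_genericMinor (xs ys : Fin m → ↥P) :
    killDiagonal K P (genericMinor K xs ys) = Dmat K P m xs ys := by
  simp only [map_genericMinor, killDiagonal_X, Dmat]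

lemma minorIdeal_sup_diagonalIdeal_le_comap_killDiagonal :
    minorIdeal K n ↥P ⊔ diagonalIdeal K ↥P ≤ (Rideal K P n).comap (killDiagonal K P) := by
  refine sup_le (Ideal.span_le.2 ?_) (Ideal.span_le.2 ?_)
  · rintro _ ⟨p, q, rfl⟩
    exact Ideal.subset_span ⟨p, q, killDiagonal_genericMinor p q⟩
  · rintro _ ⟨x, rfl⟩
    rw [SetLike.mem_coe, Ideal.mem_comap, killDiagonal_X, gen_self]
    exact Submodule.zero_mem _

/-- The homomorphism `xy ↦ ∑ₖ aₓₖ bᵧₖ`, which is well defined on the swapping ring modulo the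
relations `∑ₖ aₓₖ bₓₖ = 0`. -/
def pairingHom (K : Type) [Field K] (P : Set Circle1) (n : ℕ) :
    SwapRing K P →ₐ[K]
      MvPolynomial (↥P × (Fin n ⊕ Fin n)) K ⧸ diagonalPairingIdeal K n ↥P :=
  aeval fun z => Ideal.Quotient.mk _ (pairing K n z.1.1 z.1.2)

lemma pairingHom_killDiagonal (f : MvPolynomial (↥P × ↥P) K) :
    pairingHom K P n (killDiagonal K P f) = Ideal.Quotient.mk _ (genericProduct K n ↥P f) := by
  have pairingHom_gen (x y : ↥P) : pairingHom K P n (gen K P x y) =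
      Ideal.Quotient.mk _ (pairing K n x y) := by
    rcases eq_or_ne x y with rfl | hxy
    · rw [gen_self, map_zero, eq_comm, Ideal.Quotient.eq_zero_iff_mem]
      exact pairing_self_mem_diagonalPairingIdeal x
    · rw [gen, dif_pos hxy, pairingHom, aeval_X]
  have hom_eq : (pairingHom K P n).comp (killDiagonal K P) =
      (Ideal.Quotient.mkₐ K _).comp (genericProduct K n ↥P) :=
    MvPolynomial.algHom_ext fun ⟨x, y⟩ => by
      simp only [AlgHom.comp_apply, killDiagonal_X, pairingHom_gen, genericProduct_X,
        Ideal.Quotient.mkₐ_eq_mk]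
  exact DFunLike.congr_fun hom_eq f

lemma pairingHom_Dmat (xs ys : Fin m → ↥P) :
    pairingHom K P n (Dmat K P m xs ys) =
      Ideal.Quotient.mk _ (leftMatrix K n xs * (rightMatrix K n ys).transpose).det := by
  rw [← killDiagonal_genericMinor, pairingHom_killDiagonal, map_genericMinor]
  simp only [genericProduct_X, of_pairing_eq_leftMatrix_mul_rightMatrix_transpose]

lemma pairingHom_Dmat_eq_mul (xs ys : Fin n → ↥P) :
    pairingHom K P n (Dmat K P n xs ys) =
      Ideal.Quotient.mk _ (leftMatrix K n xs).det *
        Ideal.Quotient.mk _ (rightMatrix K n ys).det := by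
  rw [pairingHom_Dmat, Matrix.det_mul, Matrix.det_transpose, map_mul]

theorem ker_pairingHom [CharZero K] : RingHom.ker (pairingHom K P n) = Rideal K P n := by
  refine le_antisymm (fun f hf => ?_) (Ideal.span_le.2 ?_)
  · obtain ⟨F, rfl⟩ := killDiagonal_surjective f
    rw [RingHom.mem_ker, pairingHom_killDiagonal, Ideal.Quotient.eq_zero_iff_mem] at hf
    exact minorIdeal_sup_diagonalIdeal_le_comap_killDiagonal
      (comap_genericProduct_diagonalPairingIdeal_le_minorIdeal_sup hf)
  · rintro _ ⟨xs, ys, rfl⟩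
    rw [SetLike.mem_coe, RingHom.mem_ker, pairingHom_Dmat, det_mul_eq_zero_of_fin_succ, map_zero]

lemma toZn_eq_toZn_iff [CharZero K] {f g : SwapRing K P} :
    toZn K P n f = toZn K P n g ↔ pairingHom K P n f = pairingHom K P n g := by
  rw [toZn, Ideal.Quotient.eq, ← ker_pairingHom, RingHom.sub_mem_ker_iff]

lemma toZn_Dmat_mul_toZn_Dmat_comm [CharZero K] (a b v u : Fin n → ↥P) :
    toZn K P n (Dmat K P n a v) * toZn K P n (Dmat K P n b u) =
      toZn K P n (Dmat K P n a u) * toZn K P n (Dmat K P n b v) := by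
  rw [← map_mul, ← map_mul, toZn_eq_toZn_iff]
  simp only [map_mul, pairingHom_Dmat_eq_mul]
  ring

lemma toZn_Dmat_mem_nonZeroDivisors [CharZero K] (hn : 2 ≤ n) {xs ys : Fin n → ↥P}
    (hxs : Function.Injective xs) (hys : Function.Injective ys) :
    toZn K P n (Dmat K P n xs ys) ∈ nonZeroDivisors (ZnRing K P n) := by
  have : Nontrivial (Fin n) := Fin.nontrivial_iff_two_le.2 hn
  have : (diagonalPairingIdeal K n ↥P).IsPrime := diagonalPairingIdeal_isPrime
  have : (Rideal K P n).IsPrime := ker_pairingHom (K := K) ▸ RingHom.ker_isPrime (pairingHom K P n)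
  refine mem_nonZeroDivisors_of_ne_zero fun h0 => ?_
  rw [← map_zero (toZn K P n), toZn_eq_toZn_iff, map_zero, pairingHom_Dmat_eq_mul] at h0
  rcases mul_eq_zero.1 h0 with hleft | hright
  · exact det_leftMatrix_notMem_diagonalPairingIdeal hxs (Ideal.Quotient.eq_zero_iff_mem.1 hleft)
  · exact det_rightMatrix_notMem_diagonalPairingIdeal hys (Ideal.Quotient.eq_zero_iff_mem.1 hright)

theorem determinant_quotient_independent_general [CharZero K] (hn : 2 ≤ n)
    (a : Fin n → ↥P) {b v u : Fin n → ↥P} (hb : Function.Injective b)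
    (hv : Function.Injective v) (hu : Function.Injective u) :
    toZn K P n (Dmat K P n b v) ∈ nonZeroDivisors (ZnRing K P n) ∧
    toZn K P n (Dmat K P n b u) ∈ nonZeroDivisors (ZnRing K P n) ∧
    ∀ (h1 : toZn K P n (Dmat K P n b v) ∈ nonZeroDivisors (ZnRing K P n))
      (h2 : toZn K P n (Dmat K P n b u) ∈ nonZeroDivisors (ZnRing K P n)),
      EQuot K P n a b v h1 = EQuot K P n a b u h2 := by
  refine ⟨toZn_Dmat_mem_nonZeroDivisors hn hb hv, toZn_Dmat_mem_nonZeroDivisors hn hb hu,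
    fun h1 h2 => ?_⟩
  rw [EQuot, EQuot, Localization.mk_eq_mk_iff]
  refine Localization.r_of_eq ?_
  rw [mul_comm, toZn_Dmat_mul_toZn_Dmat_comm, mul_comm]

end SwappingRing

/-- Let `x_1, …, x_{n-1}, t, y, v_1, …, v_n, u_1, …, u_n ∈ P` with
`x_1, …, x_{n-1}, y` pairwise distinct, `v_1, …, v_n` pairwise distinct and `u_1, …, u_n`
pairwise distinct.  Then in `Q_n(P)`,
`Δ((x,t),(v_1,…,v_n)) / Δ((x,y),(v_1,…,v_n)) = Δ((x,t),(u_1,…,u_n)) / Δ((x,y),(u_1,…,u_n))`: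
the quotient of two `(n×n)`-determinants with the same right-side `n`-tuple does not depend
on that right-side `n`-tuple.  (Families are indexed from `0`.) -/
theorem determinant_quotient_independent (K : Type) [Field K] [CharZero K]
    (P : Set Circle1) (n : ℕ) (hn : 2 ≤ n)
    (x : ℕ → ↥P) (t y : ↥P) (v u : ℕ → ↥P)
    (hxy : Function.Injective (snocTup (n := n) x y))
    (hv : Function.Injective (fun i : Fin n => v (i : ℕ)))
    (hu : Function.Injective (fun i : Fin n => u (i : ℕ))) :
    toZn K P n (Dmat K P n (snocTup x y) (fun i : Fin n => v (i : ℕ)))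
        ∈ nonZeroDivisors (ZnRing K P n) ∧
    toZn K P n (Dmat K P n (snocTup x y) (fun i : Fin n => u (i : ℕ)))
        ∈ nonZeroDivisors (ZnRing K P n) ∧
    ∀ (h1 : toZn K P n (Dmat K P n (snocTup x y) (fun i : Fin n => v (i : ℕ)))
            ∈ nonZeroDivisors (ZnRing K P n))
      (h2 : toZn K P n (Dmat K P n (snocTup x y) (fun i : Fin n => u (i : ℕ)))
            ∈ nonZeroDivisors (ZnRing K P n)),
      EQuot K P n (snocTup x t) (snocTup x y) (fun i : Fin n => v (i : ℕ)) h1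
        = EQuot K P n (snocTup x t) (snocTup x y) (fun i : Fin n => u (i : ℕ)) h2 := by
  exact determinant_quotient_independent_general hn (snocTup x t) hxy hv hu

end
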